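/- arXiv:2010.10408 — 4 statements merged into one kernel-verified Lean document; each statement's English description precedes it below -/
import Mathlib

section
/- Let Δ ≥ 1 and let 𝒢 = (V,(E_t)_{t=1}^τ) be a temporal graph whose lifetime τ is a multiple of Δ. Let ν' be the maximum, over all i ∈ [τ/Δ], of the vertex cover number of the static graph (V, ⋃_{t=Δ(i−1)+1}^{Δi} E_t), and let ν be the Δ-vertex cover number of 𝒢. Then ν' ≤ ν ≤ 2ν'. -/
/-- A temporal graph on vertex set `V`: a lifetime `tau` and edge sets `E t`
(undirected edges, modeled as `Sym2 V`) for each time step. Only times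
`1 ≤ t ≤ tau` give rise to time edges. -/
structure TemporalGraph (V : Type*) where
  tau : ℕ
  E : ℕ → Finset (Sym2 V)

variable {V : Type*}

/-- `(e, t)` is a time edge of `G`. -/
def IsTimeEdge (G : TemporalGraph V) (et : Sym2 V × ℕ) : Prop :=
  et.1 ∈ G.E et.2 ∧ 1 ≤ et.2 ∧ et.2 ≤ G.tau

/-- Two (undirected) edges share an endpoint. -/
def ShareEndpoint (e f : Sym2 V) : Prop := ∃ v, v ∈ e ∧ v ∈ f

/-- Two time edges are `Δ`-independent: the edges share no endpoint,
or the time labels are at least `Δ` apart. -/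
def DeltaIndep (Δ : ℕ) (x y : Sym2 V × ℕ) : Prop :=
  ¬ ShareEndpoint x.1 y.1 ∨ (Δ : ℤ) ≤ |(x.2 : ℤ) - (y.2 : ℤ)|

/-- A `Δ`-temporal matching of `G`: a set of time edges of `G` that are
pairwise `Δ`-independent. -/
def IsTemporalMatching (G : TemporalGraph V) (Δ : ℕ) (M : Finset (Sym2 V × ℕ)) : Prop :=
  (∀ et ∈ M, IsTimeEdge G et) ∧ ∀ x ∈ M, ∀ y ∈ M, x ≠ y → DeltaIndep Δ x y

/-- `M[a,b]`: the time edges of `M` with time label between `a` and `b`. -/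
def restrict (M : Finset (Sym2 V × ℕ)) (a b : ℕ) : Finset (Sym2 V × ℕ) :=
  M.filter (fun et => a ≤ et.2 ∧ et.2 ≤ b)

/-- `G[a,b]`: the temporal graph on `V` whose time edges are exactly those
time edges of `G` with time label between `a` and `b`. -/
def tgSlice (G : TemporalGraph V) (a b : ℕ) : TemporalGraph V :=
  { tau := G.tau, E := fun t => if a ≤ t ∧ t ≤ b then G.E t else ∅ }

/-- `ν` suffices as a `Δ`-vertex cover bound for `G`: every `Δ` consecutive
layers can be covered by at most `ν` vertices. -/
def IsDeltaVC (G : TemporalGraph V) (Δ ν : ℕ) : Prop :=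
  ∀ i, 1 ≤ i → i ≤ G.tau - Δ + 1 →
    ∃ S : Finset V, S.card ≤ ν ∧
      ∀ t ∈ Finset.Icc i (i + Δ - 1), ∀ e ∈ G.E t, ∃ v ∈ S, v ∈ e

/-- `ν` is the `Δ`-vertex cover number of `G` (the minimum such bound). -/
def IsDeltaVCNum (G : TemporalGraph V) (Δ ν : ℕ) : Prop :=
  IsDeltaVC G Δ ν ∧ ∀ μ, IsDeltaVC G Δ μ → ν ≤ μ

/-- The maximum size of a `Δ`-temporal matching of `G`. -/
noncomputable def maxMatchingSize (G : TemporalGraph V) (Δ : ℕ) : ℕ :=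
  sSup { k | ∃ M : Finset (Sym2 V × ℕ), IsTemporalMatching G Δ M ∧ M.card = k }

/-- The vertex cover number of a static graph given by its (finite) edge set:
the minimum size of a vertex set meeting every edge. -/
noncomputable def vcNum {V : Type*} (Es : Finset (Sym2 V)) : ℕ :=
  sInf { n | ∃ C : Finset V, C.card ≤ n ∧ ∀ e ∈ Es, ∃ v ∈ C, v ∈ e }

/-- The `Δ`-vertex cover number of a temporal graph. -/
noncomputable def deltaVCNum (G : TemporalGraph V) (Δ : ℕ) : ℕ :=
  sInf { n | IsDeltaVC G Δ n }

/-!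
Both numbers are maxima of static vertex cover numbers: `ν'` over the blocks
`Δ(i-1)+1, …, Δi`, and `ν` over all windows of `Δ` consecutive time steps. Every block is a
window, whence `ν' ≤ ν`. Conversely every window is contained in the union of two blocks, so
`ν ≤ 2ν'` by monotonicity and subadditivity of the vertex cover number.
-/

/-- A vertex cover of the static graph with edge set `Es`: a finite set of vertices meeting every
edge. This is the notion whose minimum size is `vcNum Es`. -/
def IsVertexCover (C : Finset V) (Es : Finset (Sym2 V)) : Prop :=
  ∀ e ∈ Es, ∃ v ∈ C, v ∈ e

theorem exists_isVertexCover (Es : Finset (Sym2 V)) : ∃ C, IsVertexCover C Es := by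
  classical
  exact ⟨Es.image fun e => e.out.1, fun e he =>
    ⟨e.out.1, Finset.mem_image_of_mem _ he, Sym2.out_fst_mem e⟩⟩

theorem IsVertexCover.mono {C : Finset V} {Es Fs : Finset (Sym2 V)} (hC : IsVertexCover C Fs)
    (h : Es ⊆ Fs) : IsVertexCover C Es :=
  fun e he => hC e (h he)

theorem IsVertexCover.union [DecidableEq V] {C D : Finset V} {Es Fs : Finset (Sym2 V)}
    (hC : IsVertexCover C Es) (hD : IsVertexCover D Fs) : IsVertexCover (C ∪ D) (Es ∪ Fs) := by
  intro e he
  rcases Finset.mem_union.1 he with he | he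
  · obtain ⟨v, hv, hve⟩ := hC e he
    exact ⟨v, Finset.mem_union_left _ hv, hve⟩
  · obtain ⟨v, hv, hve⟩ := hD e he
    exact ⟨v, Finset.mem_union_right _ hv, hve⟩

theorem exists_isVertexCover_card_le_vcNum (Es : Finset (Sym2 V)) :
    ∃ C : Finset V, C.card ≤ vcNum Es ∧ IsVertexCover C Es :=
  have ⟨C, hC⟩ := exists_isVertexCover Es
  Nat.sInf_mem (s := {n | ∃ C : Finset V, C.card ≤ n ∧ IsVertexCover C Es}) ⟨_, C, le_rfl, hC⟩

theorem vcNum_le_iff {Es : Finset (Sym2 V)} {n : ℕ} :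
    vcNum Es ≤ n ↔ ∃ C : Finset V, C.card ≤ n ∧ IsVertexCover C Es := by
  refine ⟨fun h => ?_, fun h => Nat.sInf_le h⟩
  obtain ⟨C, hcard, hC⟩ := exists_isVertexCover_card_le_vcNum Es
  exact ⟨C, hcard.trans h, hC⟩

theorem vcNum_mono {Es Fs : Finset (Sym2 V)} (h : Es ⊆ Fs) : vcNum Es ≤ vcNum Fs := by
  obtain ⟨C, hcard, hC⟩ := exists_isVertexCover_card_le_vcNum Fs
  exact vcNum_le_iff.2 ⟨C, hcard, hC.mono h⟩

theorem vcNum_union_le [DecidableEq V] (Es Fs : Finset (Sym2 V)) :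
    vcNum (Es ∪ Fs) ≤ vcNum Es + vcNum Fs := by
  obtain ⟨C, hCcard, hC⟩ := exists_isVertexCover_card_le_vcNum Es
  obtain ⟨D, hDcard, hD⟩ := exists_isVertexCover_card_le_vcNum Fs
  exact vcNum_le_iff.2
    ⟨C ∪ D, (Finset.card_union_le C D).trans (Nat.add_le_add hCcard hDcard), hC.union hD⟩

/-- The window of `Δ` consecutive time steps starting at time `i`; the `Δ`-vertex cover number
ranges over all windows inside the lifetime. -/
def window (Δ i : ℕ) : Finset ℕ :=
  Finset.Icc i (i + Δ - 1)

/-- The `i`-th block in the partition of the positive time steps into consecutive blocks of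
length `Δ`. Blocks are numbered from `1`. -/
def block (Δ i : ℕ) : Finset ℕ :=
  Finset.Icc (Δ * (i - 1) + 1) (Δ * i)

theorem exists_block_eq_window {L i : ℕ} (Δ : ℕ) (hi : i ∈ Finset.Icc 1 L) :
    ∃ s, 1 ≤ s ∧ s + Δ ≤ L * Δ + 1 ∧ block Δ i = window Δ s := by
  obtain ⟨hi, hiL⟩ := Finset.mem_Icc.1 hi
  obtain ⟨j, rfl⟩ := Nat.exists_eq_add_of_le' hi
  have hj : Δ * (j + 1) = Δ * j + Δ := Nat.mul_succ Δ j
  have hjL : Δ * (j + 1) ≤ L * Δ := Nat.mul_comm Δ L ▸ Nat.mul_le_mul_left Δ hiL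
  refine ⟨Δ * j + 1, by omega, by omega, ?_⟩
  rw [block, window, Nat.add_sub_cancel, hj, Nat.add_right_comm, Nat.add_sub_cancel]

theorem exists_window_subset_block_union_block {Δ L i : ℕ} (hΔ : 1 ≤ Δ) (hi : 1 ≤ i)
    (hiL : i + Δ ≤ L * Δ + 1) :
    ∃ j ∈ Finset.Icc 1 L, ∃ k ∈ Finset.Icc 1 L, window Δ i ⊆ block Δ j ∪ block Δ k := by
  obtain ⟨q, r, hr, rfl⟩ : ∃ q r, r < Δ ∧ i = Δ * q + r + 1 :=
    ⟨(i - 1) / Δ, (i - 1) % Δ, Nat.mod_lt _ hΔ, by rw [Nat.div_add_mod]; omega⟩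
  have hLΔ : Δ * L = L * Δ := Nat.mul_comm Δ L
  have hq : Δ * (q + 1) = Δ * q + Δ := Nat.mul_succ Δ q
  have hq' : Δ * (q + 2) = Δ * (q + 1) + Δ := Nat.mul_succ Δ (q + 1)
  have hqL : q + 1 ≤ L := Nat.le_of_mul_le_mul_left (by omega : Δ * (q + 1) ≤ Δ * L) hΔ
  have hq_mem : q + 1 ∈ Finset.Icc 1 L := Finset.mem_Icc.2 ⟨by omega, hqL⟩
  rcases hqL.eq_or_lt with rfl | hqL
  -- A window starting in the last block starts at its first time step.
  · refine ⟨q + 1, hq_mem, q + 1, hq_mem, fun t ht => ?_⟩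
    simp only [window, block, Finset.mem_union, Finset.mem_Icc, Nat.add_sub_cancel] at ht ⊢
    omega
  · refine ⟨q + 1, hq_mem, q + 2, Finset.mem_Icc.2 ⟨by omega, hqL⟩, fun t ht => ?_⟩
    simp only [window, block, Finset.mem_union, Finset.mem_Icc, Nat.add_sub_cancel,
      show q + 2 - 1 = q + 1 from rfl] at ht ⊢
    omega

section TemporalGraph

variable [DecidableEq V] (G : TemporalGraph V)

theorem vcNum_biUnion_le_add {S T U : Finset ℕ} (h : S ⊆ T ∪ U) :
    vcNum (S.biUnion G.E) ≤ vcNum (T.biUnion G.E) + vcNum (U.biUnion G.E) :=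
  calc vcNum (S.biUnion G.E)
      ≤ vcNum ((T ∪ U).biUnion G.E) := vcNum_mono (Finset.biUnion_subset_biUnion_of_subset_left _ h)
    _ = vcNum (T.biUnion G.E ∪ U.biUnion G.E) := by rw [Finset.union_biUnion]
    _ ≤ vcNum (T.biUnion G.E) + vcNum (U.biUnion G.E) := vcNum_union_le _ _

theorem isDeltaVC_iff_forall_vcNum_le {Δ n : ℕ} :
    IsDeltaVC G Δ n ↔
      ∀ i ∈ Finset.Icc 1 (G.tau - Δ + 1), vcNum ((window Δ i).biUnion G.E) ≤ n := by
  have isVertexCover_biUnion (T : Finset ℕ) (C : Finset V) :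
      IsVertexCover C (T.biUnion G.E) ↔ ∀ t ∈ T, ∀ e ∈ G.E t, ∃ v ∈ C, v ∈ e := by
    simp only [IsVertexCover, Finset.mem_biUnion]
    exact ⟨fun h t ht e he => h e ⟨t, ht, he⟩, fun h e ⟨t, ht, he⟩ => h t ht e he⟩
  simp only [IsDeltaVC, vcNum_le_iff, isVertexCover_biUnion, window, Finset.mem_Icc, and_imp]

theorem deltaVCNum_eq_sup (Δ : ℕ) :
    deltaVCNum G Δ =
      (Finset.Icc 1 (G.tau - Δ + 1)).sup fun i => vcNum ((window Δ i).biUnion G.E) := by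
  simp only [deltaVCNum, isDeltaVC_iff_forall_vcNum_le, ← Finset.sup_le_iff]
  exact csInf_Ici

end TemporalGraph

/-- If the lifetime of `G` is `tau = L * Δ`, `ν'` is the maximum
over `i ∈ [L]` of the vertex cover number of the static graph formed by the union
of layers `Δ(i-1)+1, …, Δi`, and `ν` is the `Δ`-vertex cover number of `G`, then
`ν' ≤ ν ≤ 2ν'`. -/
theorem statement2 {V : Type*} [DecidableEq V] (Δ L : ℕ) (hΔ : 1 ≤ Δ) (hL : 1 ≤ L)
    (G : TemporalGraph V) (htau : G.tau = L * Δ)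
    (ν' : ℕ)
    (hν' : ν' = (Finset.Icc 1 L).sup
        (fun i => vcNum ((Finset.Icc (Δ * (i - 1) + 1) (Δ * i)).biUnion G.E)))
    (ν : ℕ) (hν : ν = deltaVCNum G Δ) :
    ν' ≤ ν ∧ ν ≤ 2 * ν' := by
  subst hν' hν
  have hΔ_le : Δ ≤ L * Δ := Nat.le_mul_of_pos_left Δ hL
  rw [deltaVCNum_eq_sup, htau]
  constructor
  · refine Finset.sup_le fun i hi => ?_
    obtain ⟨s, hs, hsL, hblock⟩ := exists_block_eq_window Δ hi
    change vcNum ((block Δ i).biUnion G.E) ≤ _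
    rw [hblock]
    exact Finset.le_sup (f := fun i => vcNum ((window Δ i).biUnion G.E))
      (Finset.mem_Icc.2 ⟨hs, by omega⟩)
  · refine Finset.sup_le fun i hi => ?_
    obtain ⟨hi, hiL⟩ := Finset.mem_Icc.1 hi
    obtain ⟨j, hj, k, hk, hjk⟩ :=
      exists_window_subset_block_union_block (L := L) hΔ hi (by omega)
    rw [Nat.two_mul]
    exact (vcNum_biUnion_le_add G hjk).trans (Nat.add_le_add
      (Finset.le_sup (f := fun i => vcNum ((block Δ i).biUnion G.E)) hj)
      (Finset.le_sup (f := fun i => vcNum ((block Δ i).biUnion G.E)) hk))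
end

section
/- Let Δ ≥ 1 and let 𝒢 = (V,(E_t)_{t=1}^τ) be a temporal graph. Suppose there is an a with 1 ≤ a and a+Δ−1 ≤ τ such that E_t = ∅ for all t ∈ [a, a+Δ−1]. Then the maximum size of a Δ-temporal matching of 𝒢 equals the maximum size of a Δ-temporal matching of 𝒢[1, a−1] plus the maximum size of a Δ-temporal matching of 𝒢[a+Δ, τ]. -/
variable {V : Type*}

/-! Restricting a matching `M` of `G` to the times on either side of the empty window loses no time
edge and leaves a matching on each side. Conversely, edges on opposite sides of the window have
times more than `Δ` apart, so a matching on the left and a matching on the right are disjoint and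
their union is a matching of `G`. -/

theorem DeltaIndep.symm {Δ : ℕ} {x y : Sym2 V × ℕ} (h : DeltaIndep Δ x y) : DeltaIndep Δ y x :=
  h.imp (fun hxy ⟨v, hvy, hvx⟩ ↦ hxy ⟨v, hvx, hvy⟩) fun hxy ↦ abs_sub_comm (y.2 : ℤ) x.2 ▸ hxy

theorem DeltaIndep.of_add_le {Δ : ℕ} {x y : Sym2 V × ℕ} (h : x.2 + Δ ≤ y.2) :
    DeltaIndep Δ x y :=
  .inr <| le_abs.mpr <| .inr <| by omega

theorem isTimeEdge_tgSlice {G : TemporalGraph V} {a b : ℕ} {x : Sym2 V × ℕ} :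
    IsTimeEdge (tgSlice G a b) x ↔ IsTimeEdge G x ∧ a ≤ x.2 ∧ x.2 ≤ b := by
  by_cases h : a ≤ x.2 ∧ x.2 ≤ b <;> simp [IsTimeEdge, tgSlice, h]

theorem finite_setOf_isTimeEdge (G : TemporalGraph V) : {x | IsTimeEdge G x}.Finite := by
  have hfin : (⋃ t ∈ Set.Icc 1 G.tau, (G.E t : Set (Sym2 V)) ×ˢ {t}).Finite :=
    (Set.finite_Icc 1 G.tau).biUnion fun t _ ↦
      (G.E t).finite_toSet.prod (Set.finite_singleton t)
  exact hfin.subset fun x hx ↦ Set.mem_biUnion hx.2 ⟨hx.1, rfl⟩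

theorem mem_restrict {M : Finset (Sym2 V × ℕ)} {a b : ℕ} {x : Sym2 V × ℕ} :
    x ∈ restrict M a b ↔ x ∈ M ∧ a ≤ x.2 ∧ x.2 ≤ b :=
  Finset.mem_filter

namespace IsTemporalMatching

variable {G : TemporalGraph V} {Δ : ℕ} {M N : Finset (Sym2 V × ℕ)}

theorem empty (G : TemporalGraph V) (Δ : ℕ) : IsTemporalMatching G Δ ∅ := by
  simp [IsTemporalMatching]

theorem of_tgSlice {a b : ℕ} (hM : IsTemporalMatching (tgSlice G a b) Δ M) :
    IsTemporalMatching G Δ M :=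
  ⟨fun x hx ↦ (isTimeEdge_tgSlice.mp (hM.1 x hx)).1, hM.2⟩

theorem restrict_tgSlice (hM : IsTemporalMatching G Δ M) (a b : ℕ) :
    IsTemporalMatching (tgSlice G a b) Δ (restrict M a b) := by
  refine ⟨fun x hx ↦ ?_, fun x hx y hy ↦ hM.2 x (mem_restrict.mp hx).1 y (mem_restrict.mp hy).1⟩
  obtain ⟨hxM, hxab⟩ := mem_restrict.mp hx
  exact isTimeEdge_tgSlice.mpr ⟨hM.1 x hxM, hxab⟩

theorem union [DecidableEq V] (hM : IsTemporalMatching G Δ M) (hN : IsTemporalMatching G Δ N)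
    (hMN : ∀ x ∈ M, ∀ y ∈ N, DeltaIndep Δ x y) : IsTemporalMatching G Δ (M ∪ N) := by
  refine ⟨fun x hx ↦ (Finset.mem_union.mp hx).elim (hM.1 x) (hN.1 x), fun x hx y hy hxy ↦ ?_⟩
  rcases Finset.mem_union.mp hx with hxM | hxN <;> rcases Finset.mem_union.mp hy with hyM | hyN
  · exact hM.2 x hxM y hyM hxy
  · exact hMN x hxM y hyN
  · exact (hMN y hyM x hxN).symm
  · exact hN.2 x hxN y hyN hxy

theorem bddAbove_card (G : TemporalGraph V) (Δ : ℕ) :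
    BddAbove {k | ∃ M : Finset (Sym2 V × ℕ), IsTemporalMatching G Δ M ∧ M.card = k} := by
  refine ⟨{x | IsTimeEdge G x}.ncard, ?_⟩
  rintro _ ⟨M, hM, rfl⟩
  rw [← Set.ncard_coe_finset]
  exact Set.ncard_le_ncard hM.1 (finite_setOf_isTimeEdge G)

theorem card_le_maxMatchingSize (hM : IsTemporalMatching G Δ M) :
    M.card ≤ maxMatchingSize G Δ :=
  le_csSup (bddAbove_card G Δ) ⟨M, hM, rfl⟩

theorem exists_card_eq_maxMatchingSize (G : TemporalGraph V) (Δ : ℕ) :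
    ∃ M : Finset (Sym2 V × ℕ), IsTemporalMatching G Δ M ∧ M.card = maxMatchingSize G Δ := by
  refine Nat.sSup_mem ?_ (bddAbove_card G Δ)
  exact ⟨0, ∅, empty G Δ, Finset.card_empty⟩

end IsTemporalMatching

theorem maxMatchingSize_le_add_tgSlice {G : TemporalGraph V} (Δ : ℕ) {a b c d : ℕ}
    (hcover : ∀ x, IsTimeEdge G x → (a ≤ x.2 ∧ x.2 ≤ b) ∨ (c ≤ x.2 ∧ x.2 ≤ d)) :
    maxMatchingSize G Δ ≤
      maxMatchingSize (tgSlice G a b) Δ + maxMatchingSize (tgSlice G c d) Δ := by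
  classical
  obtain ⟨M, hM, hcard⟩ := IsTemporalMatching.exists_card_eq_maxMatchingSize G Δ
  have hsplit : M ⊆ restrict M a b ∪ restrict M c d := fun x hx ↦
    Finset.mem_union.mpr <| (hcover x (hM.1 x hx)).imp
      (fun h ↦ mem_restrict.mpr ⟨hx, h⟩) (fun h ↦ mem_restrict.mpr ⟨hx, h⟩)
  calc
    maxMatchingSize G Δ = M.card := hcard.symm
    _ ≤ (restrict M a b ∪ restrict M c d).card := Finset.card_le_card hsplit
    _ ≤ (restrict M a b).card + (restrict M c d).card := Finset.card_union_le _ _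
    _ ≤ maxMatchingSize (tgSlice G a b) Δ + maxMatchingSize (tgSlice G c d) Δ :=
      Nat.add_le_add (hM.restrict_tgSlice a b).card_le_maxMatchingSize
        (hM.restrict_tgSlice c d).card_le_maxMatchingSize

theorem maxMatchingSize_tgSlice_add_le (G : TemporalGraph V) {Δ b c : ℕ} (a d : ℕ)
    (hbc : b < c) (hgap : b + Δ ≤ c) :
    maxMatchingSize (tgSlice G a b) Δ + maxMatchingSize (tgSlice G c d) Δ ≤
      maxMatchingSize G Δ := by
  classical
  obtain ⟨M, hM, hMcard⟩ := IsTemporalMatching.exists_card_eq_maxMatchingSize (tgSlice G a b) Δ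
  obtain ⟨N, hN, hNcard⟩ := IsTemporalMatching.exists_card_eq_maxMatchingSize (tgSlice G c d) Δ
  have hM_le : ∀ x ∈ M, x.2 ≤ b := fun x hx ↦ (isTimeEdge_tgSlice.mp (hM.1 x hx)).2.2
  have hN_ge : ∀ y ∈ N, c ≤ y.2 := fun y hy ↦ (isTimeEdge_tgSlice.mp (hN.1 y hy)).2.1
  have hdisj : Disjoint M N := Finset.disjoint_left.mpr fun x hxM hxN ↦
    (((hM_le x hxM).trans_lt hbc).trans_le (hN_ge x hxN)).false
  have hindep : ∀ x ∈ M, ∀ y ∈ N, DeltaIndep Δ x y := fun x hx y hy ↦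
    .of_add_le <| (Nat.add_le_add_right (hM_le x hx) Δ).trans (hgap.trans (hN_ge y hy))
  rw [← hMcard, ← hNcard, ← Finset.card_union_of_disjoint hdisj]
  exact (hM.of_tgSlice.union hN.of_tgSlice hindep).card_le_maxMatchingSize

/-- If `G` has `Δ` consecutive empty layers `[a, a+Δ-1] ⊆ [1,tau]`,
then the maximum size of a `Δ`-temporal matching of `G` equals the maximum size
of a `Δ`-temporal matching of `G[1, a-1]` plus that of `G[a+Δ, tau]`. -/
theorem statement3 {V : Type*} (Δ : ℕ) (hΔ : 1 ≤ Δ) (G : TemporalGraph V)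
    (a : ℕ) (ha : 1 ≤ a) (hb : a + Δ - 1 ≤ G.tau)
    (hempty : ∀ t ∈ Finset.Icc a (a + Δ - 1), G.E t = ∅) :
    maxMatchingSize G Δ =
      maxMatchingSize (tgSlice G 1 (a - 1)) Δ +
        maxMatchingSize (tgSlice G (a + Δ) G.tau) Δ := by
  have hcover : ∀ x, IsTimeEdge G x → (1 ≤ x.2 ∧ x.2 ≤ a - 1) ∨ (a + Δ ≤ x.2 ∧ x.2 ≤ G.tau) := by
    rintro x ⟨hxE, hx_pos, hx_le⟩
    have hx_notMem : x.2 ∉ Finset.Icc a (a + Δ - 1) := fun hx ↦ by simp [hempty x.2 hx] at hxE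
    rw [Finset.mem_Icc] at hx_notMem
    omega
  exact le_antisymm (maxMatchingSize_le_add_tgSlice Δ hcover)
    (maxMatchingSize_tgSlice_add_le G 1 G.tau (by omega) (by omega))
end

section
/- Let Δ ≥ 2 and let T be a Δ-postfix tree rooted at v with leaves v_1,…,v_Δ in postfix order. Let [a,b] be a nonempty proper subinterval of [Δ] with a = 1 or b = Δ, and let S := N_T(⋃_{i ∈ [Δ]\[a,b]} V(P_i)) be the [a,b]-separator of T, where P_i is the v_i–v path in T. Then (1) |S| ≤ ⌈log₂ Δ⌉ + 1, and (2) for every i ∈ [Δ], the v_i–v path in T contains a vertex from S if and only if i ∈ [a,b]. -/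
/-!
Write `X` for the union of the paths `P_i` with `i ∉ [a, b]`. It is closed under taking ancestors,
so its neighborhood `S` consists of the children of vertices of `X` that lie outside `X`, and a path
to the root meets `S` exactly when it starts outside `X`, by looking at the point where it enters
`X`. For the leaves, lying outside `X` means having index in `[a, b]`.

For the size of `S`, let `v_c` be the leaf just outside `[a, b]`, so that `c` lies between any index
in `[a, b]` and any index outside. If `x ∈ S` has parent `u`, then below `u` there is a leaf with
index in `[a, b]` (below `x`) and one with index outside, hence also `v_c`. So `x` hangs off the
single path `P_c`, and since the tree is binary, each of the at most `⌈log₂ Δ⌉` vertices of `P_c`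
other than `v_c` has at most one child off the path.
-/

/-- A rooted tree on vertex type `α`, given by a parent function: the root is
its own parent and every vertex reaches the root by iterating `parent`. -/
structure RTree (α : Type*) where
  root : α
  parent : α → α
  parent_root : parent root = root
  reaches_root : ∀ v, ∃ n, parent^[n] v = root

namespace RTree

variable {α : Type*} (T : RTree α)

/-- `v` is a descendant of `u` (possibly `v = u`). -/
def Desc (u v : α) : Prop := ∃ n, T.parent^[n] v = u

/-- The vertex set `V(P_v)` of the (unique) path from `v` to the root. -/
def pathSet (v : α) : Set α := { u | T.Desc u v }

/-- `w` is a child of `u`. -/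
def IsChild (w u : α) : Prop := w ≠ T.root ∧ T.parent w = u

/-- A leaf is a vertex with no children. -/
def IsLeaf (v : α) : Prop := ∀ w, ¬ T.IsChild w v

/-- Two vertices are adjacent in the (undirected) tree iff one is a child of
the other. -/
def Adj (u w : α) : Prop := T.IsChild u w ∨ T.IsChild w u

/-- The neighborhood `N_T(X)` of a vertex set `X`: vertices outside `X`
adjacent to some vertex of `X`. -/
def nbhd (X : Set α) : Set α := { v | v ∉ X ∧ ∃ u ∈ X, T.Adj v u }

/-- The depth of `v`: its distance to the root. -/
noncomputable def depth (v : α) : ℕ := sInf { n | T.parent^[n] v = T.root }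

end RTree

/-- A `Δ`-postfix tree: a rooted full binary tree of depth at most `⌈log₂ Δ⌉`
whose leaves are exactly `leaf 1, …, leaf Δ`, listed in post order (for every
vertex `u`, the set of indices of leaves below `u` is a set of consecutive
integers). -/
structure DeltaPostfixTree (α : Type*) (Δ : ℕ) extends RTree α where
  leaf : ℕ → α
  leaf_isLeaf : ∀ i ∈ Finset.Icc 1 Δ, toRTree.IsLeaf (leaf i)
  leaf_injOn : ∀ i ∈ Finset.Icc 1 Δ, ∀ j ∈ Finset.Icc 1 Δ, leaf i = leaf j → i = j
  leaf_surj : ∀ v, toRTree.IsLeaf v → ∃ i ∈ Finset.Icc 1 Δ, leaf i = v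
  full_binary : ∀ v, ¬ toRTree.IsLeaf v →
    {w | toRTree.IsChild w v}.ncard = 2
  depth_le : ∀ v, toRTree.depth v ≤ Nat.clog 2 Δ
  post_order : ∀ u, ∀ i ∈ Finset.Icc 1 Δ, ∀ j ∈ Finset.Icc 1 Δ, ∀ k ∈ Finset.Icc 1 Δ,
    i ≤ j → j ≤ k → toRTree.Desc u (leaf i) → toRTree.Desc u (leaf k) →
    toRTree.Desc u (leaf j)

/-- The `[a,b]`-separator of a `Δ`-postfix tree:
`S = N_T(⋃_{i ∈ [Δ] \ [a,b]} V(P_i))`, where `P_i` is the path from the `i`-th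
leaf to the root. -/
def separator {α : Type*} {Δ : ℕ} (T : DeltaPostfixTree α Δ) (a b : ℕ) : Set α :=
  T.toRTree.nbhd
    (⋃ i ∈ (Finset.Icc 1 Δ \ Finset.Icc a b), T.toRTree.pathSet (T.leaf i))

namespace RTree

variable {α : Type*} {T : RTree α} {u v w : α} {X : Set α}

theorem desc_refl (v : α) : T.Desc v v := ⟨0, rfl⟩

theorem desc_parent (v : α) : T.Desc (T.parent v) v := ⟨1, rfl⟩

theorem Desc.trans (huv : T.Desc u v) (hvw : T.Desc v w) : T.Desc u w := by
  obtain ⟨m, rfl⟩ := huv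
  obtain ⟨n, rfl⟩ := hvw
  exact ⟨m + n, Function.iterate_add_apply _ _ _ _⟩

theorem IsChild.desc (h : T.IsChild w u) : T.Desc u w := ⟨1, h.2⟩

theorem Desc.exists_isChild (h : T.Desc u v) (hne : v ≠ u) :
    ∃ w, T.IsChild w u ∧ T.Desc w v := by
  obtain ⟨n, hn⟩ := h
  induction n with
  | zero => exact absurd hn hne
  | succ n ih =>
    rw [Function.iterate_succ_apply'] at hn
    by_cases hroot : T.parent^[n] v = T.root
    · exact ih (by rw [← hn, hroot, T.parent_root])
    · exact ⟨_, ⟨hroot, hn⟩, n, rfl⟩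

theorem IsLeaf.eq_of_desc (hu : T.IsLeaf u) (h : T.Desc u v) : v = u := by
  by_contra hne
  obtain ⟨w, hw, -⟩ := h.exists_isChild hne
  exact hu w hw

theorem iterate_parent_depth (T : RTree α) (v : α) : T.parent^[T.depth v] v = T.root :=
  Nat.sInf_mem (T.reaches_root v)

theorem IsChild.depth_lt (h : T.IsChild w u) : T.depth u < T.depth w := by
  obtain ⟨hroot, rfl⟩ := h
  have hw := T.iterate_parent_depth w
  cases hd : T.depth w with
  | zero => exact absurd (hd ▸ hw : T.parent^[0] w = T.root) hroot
  | succ n =>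
    rw [hd, Function.iterate_succ_apply] at hw
    exact Nat.lt_succ_of_le (Nat.sInf_le hw)

theorem pathSet_subset_image_iterate (v : α) :
    T.pathSet v ⊆ (T.parent^[·] v) '' Finset.range (T.depth v + 1) := by
  rintro _ ⟨n, rfl⟩
  rcases le_total n (T.depth v) with hn | hn
  · exact ⟨n, Finset.mem_range_succ_iff.2 hn, rfl⟩
  · obtain ⟨k, rfl⟩ := Nat.exists_eq_add_of_le' hn
    refine ⟨T.depth v, Finset.self_mem_range_succ _, ?_⟩
    simp only [Function.iterate_add_apply, iterate_parent_depth,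
      Function.iterate_fixed T.parent_root]

theorem encard_pathSet_sdiff_singleton_le (v : α) :
    (T.pathSet v \ {v}).encard ≤ T.depth v := by
  have hv : v ∈ T.pathSet v := desc_refl v
  rw [← ENat.add_le_add_iff_right ENat.one_ne_top, Set.encard_sdiff_singleton_add_one hv]
  calc (T.pathSet v).encard
      ≤ ((T.parent^[·] v) '' Finset.range (T.depth v + 1)).encard :=
        Set.encard_le_encard (pathSet_subset_image_iterate v)
    _ ≤ (Finset.range (T.depth v + 1) : Set ℕ).encard := Set.encard_image_le _ _
    _ = T.depth v + 1 := by
        rw [Set.encard_coe_eq_coe_finsetCard, Finset.card_range, Nat.cast_add_one]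

/-- A vertex set is ancestor-closed if it contains the whole path to the root from each of its
vertices; nonempty such sets are the subtrees through the root. -/
def AncestorClosed (T : RTree α) (X : Set α) : Prop :=
  ∀ ⦃v⦄, v ∈ X → T.pathSet v ⊆ X

theorem ancestorClosed_pathSet (v : α) : T.AncestorClosed (T.pathSet v) :=
  fun _ hw _ hu => hu.trans hw

theorem AncestorClosed.root_mem (hX : T.AncestorClosed X) (hne : X.Nonempty) : T.root ∈ X :=
  hX hne.some_mem (T.reaches_root _)

theorem AncestorClosed.mem_nbhd_iff (hX : T.AncestorClosed X) :
    v ∈ T.nbhd X ↔ v ∉ X ∧ ∃ u ∈ X, T.IsChild v u := by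
  refine and_congr_right fun hv => exists_congr fun u => and_congr_right fun hu => ?_
  exact or_iff_left fun hchild : T.IsChild u v => hv (hX hu hchild.desc)

theorem AncestorClosed.exists_desc_mem_nbhd (hX : T.AncestorClosed X) (hne : X.Nonempty)
    (hv : v ∉ X) : ∃ w ∈ T.nbhd X, T.Desc w v := by
  have hroot := hX.root_mem hne
  obtain ⟨n, hn⟩ := T.reaches_root v
  induction n generalizing v with
  | zero => exact absurd ((show v = T.root from hn) ▸ hroot) hv
  | succ n ih =>
    by_cases hparent : T.parent v ∈ X
    · have hchild : T.IsChild v (T.parent v) := ⟨fun h => hv (h ▸ hroot), rfl⟩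
      exact ⟨v, hX.mem_nbhd_iff.2 ⟨hv, _, hparent, hchild⟩, desc_refl v⟩
    · obtain ⟨w, hw, hwv⟩ := ih hparent hn
      exact ⟨w, hw, hwv.trans (desc_parent v)⟩

theorem AncestorClosed.pathSet_inter_nbhd_nonempty_iff (hX : T.AncestorClosed X)
    (hne : X.Nonempty) : (T.pathSet v ∩ T.nbhd X).Nonempty ↔ v ∉ X := by
  constructor
  · rintro ⟨w, hwv, hw⟩ hv
    exact hw.1 (hX hv hwv)
  · intro hv
    obtain ⟨w, hw, hwv⟩ := hX.exists_desc_mem_nbhd hne hv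
    exact ⟨w, hwv, hw⟩

theorem eq_of_isChild_of_encard_le_two {x y : α} (hu : {z | T.IsChild z u}.encard ≤ 2)
    (hw : T.IsChild w u) (hx : T.IsChild x u) (hy : T.IsChild y u) (hxw : x ≠ w) (hyw : y ≠ w) :
    x = y := by
  have hsiblings : ({z | T.IsChild z u} \ {w}).encard ≤ 1 := by
    have hmem : w ∈ {z | T.IsChild z u} := hw
    rw [← ENat.add_le_add_iff_right ENat.one_ne_top, Set.encard_sdiff_singleton_add_one hmem,
      one_add_one_eq_two]
    exact hu
  exact Set.encard_le_one_iff.1 hsiblings x y ⟨hx, hxw⟩ ⟨hy, hyw⟩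

theorem encard_nbhd_pathSet_le (hbinary : ∀ u, {z | T.IsChild z u}.encard ≤ 2)
    (hv : T.IsLeaf v) : (T.nbhd (T.pathSet v)).encard ≤ T.depth v := by
  have isChild_parent : ∀ x ∈ T.nbhd (T.pathSet v),
      x ∉ T.pathSet v ∧ T.parent x ∈ T.pathSet v ∧ T.IsChild x (T.parent x) := by
    intro x hx
    obtain ⟨hxv, u, hu, hxu⟩ := (ancestorClosed_pathSet v).mem_nbhd_iff.1 hx
    exact ⟨hxv, hxu.2.symm ▸ hu, hxu.1, rfl⟩
  have parent_ne : ∀ x ∈ T.nbhd (T.pathSet v), v ≠ T.parent x := fun x hx h =>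
    hv x (h ▸ (isChild_parent x hx).2.2)
  refine (Set.encard_le_encard_of_injOn (f := T.parent) (fun x hx => ?_) ?_).trans
    (encard_pathSet_sdiff_singleton_le v)
  · exact ⟨(isChild_parent x hx).2.1, (parent_ne x hx).symm⟩
  · intro x hx y hy hxy
    obtain ⟨hxv, hpv, hxp⟩ := isChild_parent x hx
    obtain ⟨hyv, -, hyp⟩ := isChild_parent y hy
    obtain ⟨w, hwp, hwv⟩ := Desc.exists_isChild hpv (parent_ne x hx)
    exact eq_of_isChild_of_encard_le_two (hbinary _) hwp hxp (hxy ▸ hyp)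
      (fun h => hxv (h ▸ hwv)) (fun h => hyv (h ▸ hwv))

end RTree

namespace DeltaPostfixTree

variable {α : Type*} {Δ : ℕ} (T : DeltaPostfixTree α Δ) {I : Finset ℕ} {c i j k : ℕ}

theorem encard_setOf_isChild_le (u : α) : {w | T.IsChild w u}.encard ≤ 2 := by
  by_cases hu : T.IsLeaf u
  · have hempty : {w | T.IsChild w u} = ∅ := Set.eq_empty_of_forall_notMem hu
    rw [hempty, Set.encard_empty]
    exact zero_le
  · have hcard := T.full_binary u hu
    rw [← (Set.finite_of_ncard_ne_zero (by omega)).cast_ncard_eq, hcard]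
    rfl

theorem exists_desc_leaf (v : α) : ∃ i ∈ Finset.Icc 1 Δ, T.Desc v (T.leaf i) := by
  induction hk : Nat.clog 2 Δ - T.depth v using Nat.strong_induction_on generalizing v with
  | _ k ih =>
    by_cases hv : T.IsLeaf v
    · obtain ⟨i, hi, rfl⟩ := T.leaf_surj v hv
      exact ⟨i, hi, RTree.desc_refl _⟩
    · obtain ⟨w, hw⟩ : ∃ w, T.IsChild w v := by simpa only [RTree.IsLeaf, not_forall_not] using hv
      have hdepth := hw.depth_lt
      have hbound := T.depth_le w
      obtain ⟨i, hi, hwi⟩ := ih _ (by omega) w rfl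
      exact ⟨i, hi, hw.desc.trans hwi⟩

theorem desc_leaf_of_mem_uIcc {u : α} (hi : i ∈ Finset.Icc 1 Δ) (hk : k ∈ Finset.Icc 1 Δ)
    (hj : j ∈ Set.uIcc i k) (hui : T.Desc u (T.leaf i)) (huk : T.Desc u (T.leaf k)) :
    T.Desc u (T.leaf j) := by
  have hjΔ : j ∈ Finset.Icc 1 Δ := by
    have hsub : Set.uIcc i k ⊆ Set.Icc 1 Δ :=
      Set.uIcc_subset_Icc (Finset.mem_Icc.1 hi) (Finset.mem_Icc.1 hk)
    exact Finset.mem_Icc.2 (hsub hj)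
  rcases Set.mem_uIcc.1 hj with ⟨hij, hjk⟩ | ⟨hkj, hji⟩
  · exact T.post_order u i hi j hjΔ k hk hij hjk hui huk
  · exact T.post_order u k hk j hjΔ i hi hkj hji huk hui

/-- The union `⋃_{i ∈ I} V(P_i)` of the paths to the root from the leaves with index in `I`. The
`[a, b]`-separator is its neighborhood for `I = [Δ] \ [a, b]`. -/
def leafPaths (I : Finset ℕ) : Set α := ⋃ i ∈ I, T.pathSet (T.leaf i)

theorem mem_leafPaths {u : α} : u ∈ T.leafPaths I ↔ ∃ i ∈ I, T.Desc u (T.leaf i) := by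
  simp only [leafPaths, Set.mem_iUnion, exists_prop, RTree.pathSet, Set.mem_ofPred_eq]

theorem ancestorClosed_leafPaths : T.AncestorClosed (T.leafPaths I) := by
  intro v hv u huv
  obtain ⟨i, hi, hvi⟩ := T.mem_leafPaths.1 hv
  exact T.mem_leafPaths.2 ⟨i, hi, RTree.Desc.trans huv hvi⟩

theorem leaf_mem_leafPaths_of_mem (hi : i ∈ I) : T.leaf i ∈ T.leafPaths I :=
  T.mem_leafPaths.2 ⟨i, hi, RTree.desc_refl _⟩

theorem leaf_mem_leafPaths_iff (hI : I ⊆ Finset.Icc 1 Δ) (hi : i ∈ Finset.Icc 1 Δ) :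
    T.leaf i ∈ T.leafPaths I ↔ i ∈ I := by
  refine ⟨fun h => ?_, T.leaf_mem_leafPaths_of_mem⟩
  obtain ⟨j, hj, hij⟩ := T.mem_leafPaths.1 h
  have hleaf : T.leaf j = T.leaf i := (T.leaf_isLeaf i hi).eq_of_desc hij
  exact T.leaf_injOn j (hI hj) i hi hleaf ▸ hj

theorem pathSet_leaf_inter_nbhd_leafPaths_nonempty_iff (hI : I ⊆ Finset.Icc 1 Δ)
    (hne : I.Nonempty) (hi : i ∈ Finset.Icc 1 Δ) :
    (T.pathSet (T.leaf i) ∩ T.nbhd (T.leafPaths I)).Nonempty ↔ i ∉ I := by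
  obtain ⟨c, hc⟩ := hne
  rw [T.ancestorClosed_leafPaths.pathSet_inter_nbhd_nonempty_iff
    ⟨_, T.leaf_mem_leafPaths_of_mem hc⟩, T.leaf_mem_leafPaths_iff hI hi]

theorem nbhd_leafPaths_subset_nbhd_pathSet (hI : I ⊆ Finset.Icc 1 Δ) (hc : c ∈ I)
    (hbetween : ∀ i ∈ Finset.Icc 1 Δ \ I, ∀ j ∈ I, c ∈ Set.uIcc i j) :
    T.nbhd (T.leafPaths I) ⊆ T.nbhd (T.pathSet (T.leaf c)) := by
  intro x hx
  obtain ⟨hxI, u, hu, hxu⟩ := T.ancestorClosed_leafPaths.mem_nbhd_iff.1 hx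
  have not_desc : ∀ i ∈ I, ¬ T.Desc x (T.leaf i) := fun i hi h =>
    hxI (T.mem_leafPaths.2 ⟨i, hi, h⟩)
  obtain ⟨i, hi, hxi⟩ := T.exists_desc_leaf x
  obtain ⟨j, hj, huj⟩ := T.mem_leafPaths.1 hu
  have hiI : i ∈ Finset.Icc 1 Δ \ I := Finset.mem_sdiff.2 ⟨hi, fun h => not_desc i h hxi⟩
  have huc : T.Desc u (T.leaf c) :=
    T.desc_leaf_of_mem_uIcc hi (hI hj) (hbetween i hiI j hj) (hxu.desc.trans hxi) huj
  exact (RTree.ancestorClosed_pathSet _).mem_nbhd_iff.2 ⟨not_desc c hc, u, huc, hxu⟩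

theorem encard_nbhd_leafPaths_le (hI : I ⊆ Finset.Icc 1 Δ) (hc : c ∈ I)
    (hbetween : ∀ i ∈ Finset.Icc 1 Δ \ I, ∀ j ∈ I, c ∈ Set.uIcc i j) :
    (T.nbhd (T.leafPaths I)).encard ≤ Nat.clog 2 Δ :=
  calc (T.nbhd (T.leafPaths I)).encard
      ≤ (T.nbhd (T.pathSet (T.leaf c))).encard :=
        Set.encard_le_encard (T.nbhd_leafPaths_subset_nbhd_pathSet hI hc hbetween)
    _ ≤ T.depth (T.leaf c) :=
        RTree.encard_nbhd_pathSet_le T.encard_setOf_isChild_le (T.leaf_isLeaf c (hI hc))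
    _ ≤ Nat.clog 2 Δ := mod_cast T.depth_le _

end DeltaPostfixTree

theorem exists_mem_sdiff_Icc_forall_mem_uIcc {Δ a b : ℕ} (ha : 1 ≤ a) (hab : a ≤ b) (hb : b ≤ Δ)
    (hend : a = 1 ∨ b = Δ) (hproper : ¬(a = 1 ∧ b = Δ)) :
    ∃ c ∈ Finset.Icc 1 Δ \ Finset.Icc a b,
      ∀ i ∈ Finset.Icc a b, ∀ j ∈ Finset.Icc 1 Δ \ Finset.Icc a b, c ∈ Set.uIcc i j := by
  simp only [Finset.mem_sdiff, Finset.mem_Icc, Set.mem_uIcc]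
  rcases hend with rfl | rfl
  · exact ⟨b + 1, by omega, fun i hi j hj => by omega⟩
  · exact ⟨a - 1, by omega, fun i hi j hj => by omega⟩

theorem statement5_general {α : Type*} {Δ : ℕ} (T : DeltaPostfixTree α Δ) (a b : ℕ)
    (ha : 1 ≤ a) (hab : a ≤ b) (hb : b ≤ Δ) (hend : a = 1 ∨ b = Δ)
    (hproper : ¬(a = 1 ∧ b = Δ)) :
    (separator T a b).encard ≤ Nat.clog 2 Δ ∧
      ∀ i ∈ Finset.Icc 1 Δ,
        (T.toRTree.pathSet (T.leaf i) ∩ separator T a b).Nonempty ↔ (a ≤ i ∧ i ≤ b) := by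
  obtain ⟨c, hc, hbetween⟩ := exists_mem_sdiff_Icc_forall_mem_uIcc ha hab hb hend hproper
  have houtside : Finset.Icc 1 Δ \ Finset.Icc a b ⊆ Finset.Icc 1 Δ := Finset.sdiff_subset
  have hinside : Finset.Icc 1 Δ \ (Finset.Icc 1 Δ \ Finset.Icc a b) = Finset.Icc a b :=
    Finset.sdiff_sdiff_eq_self (Finset.Icc_subset_Icc ha hb)
  refine ⟨T.encard_nbhd_leafPaths_le houtside hc (hinside.symm ▸ hbetween), fun i hi => ?_⟩
  refine (T.pathSet_leaf_inter_nbhd_leafPaths_nonempty_iff houtside ⟨c, hc⟩ hi).trans ?_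
  rw [Finset.mem_sdiff, not_and_not_right, Finset.mem_Icc (a := a), imp_iff_right hi]

/-- For a `Δ`-postfix tree `T` (`Δ ≥ 2`) and a nonempty proper
subinterval `[a,b]` of `[Δ]` with `a = 1` or `b = Δ`, the `[a,b]`-separator `S`
satisfies: (1) `|S| ≤ ⌈log₂ Δ⌉ + 1`, and (2) for every `i ∈ [Δ]`, the path from
the `i`-th leaf to the root contains a vertex of `S` iff `i ∈ [a,b]`. -/
theorem statement5 {α : Type*} [Fintype α] {Δ : ℕ} (hΔ : 2 ≤ Δ)
    (T : DeltaPostfixTree α Δ) (a b : ℕ) (ha : 1 ≤ a) (hab : a ≤ b) (hb : b ≤ Δ)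
    (hend : a = 1 ∨ b = Δ) (hproper : ¬(a = 1 ∧ b = Δ)) :
    (separator T a b).ncard ≤ Nat.clog 2 Δ + 1 ∧
      ∀ i ∈ Finset.Icc 1 Δ,
        (T.toRTree.pathSet (T.leaf i) ∩ separator T a b).Nonempty ↔
          (a ≤ i ∧ i ≤ b) := by
  obtain ⟨hcard, hmeet⟩ := statement5_general T a b ha hab hb hend hproper
  exact ⟨(ENat.toNat_le_of_le_natCast hcard).trans (Nat.le_succ _), hmeet⟩
end

section
/- Let α, β, γ be non-negative integers with r = (α+β)γ ≥ 1, let U be a finite set, let ω : U → ℕ be a weight function, and let ℋ ⊆ 2^U be a γ-family (every member has exactly γ elements). Let 𝒮 := { S = H_1 ⊎ H_2 ⊎ … ⊎ H_α : H_1,…,H_α ∈ ℋ are pairwise disjoint }. Then there exists a max βγ-representative Ŝ ⊆ 𝒮 of 𝒮 with respect to the weight ω'(X) := Σ_{x∈X} ω(x) such that |Ŝ| ≤ binom(r, αγ). -/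
/-- `Shat` is a max `q`-representative of the family `S` over universe `U`
with respect to the weight `ω'`: for every set `Y` of size at most `q`, if some
`X ∈ S` is disjoint from `Y`, then some `Xhat ∈ Shat` is disjoint from `Y`
with `ω'(Xhat) ≥ ω'(X)`. -/
def IsMaxQRepresentative {U : Type*} [DecidableEq U] (q : ℕ)
    (S Shat : Set (Finset U)) (ω' : Finset U → ℕ) : Prop :=
  Shat ⊆ S ∧
    ∀ Y : Finset U, Y.card ≤ q →
      ∀ X ∈ S, Disjoint X Y →
        ∃ Xhat ∈ Shat, Disjoint Xhat Y ∧ ω' X ≤ ω' Xhat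

/-!
Embed the universe in a field `K` by `t`. A set `X` of size `p` becomes the monic polynomial
`∏ x ∈ X, (T - t x)` of degree `p`, hence a point of `K ^ p`, its vector of lower coefficients. The
value of that monic polynomial at `t y` is an affine function of the point, so a set `Y` of size at
most `q` gives a polynomial of total degree at most `q` in `p` variables that vanishes at the point
of `X` exactly when `X` meets `Y`. Evaluations at the points of the family are vectors in the dual
of the space of polynomials of total degree at most `q`, which has dimension `(p + q).choose p`. A
basis of their span chosen greedily by decreasing weight is the representative: a functional that
does not vanish on a vector does not vanish on some basis vector of at least the same weight.
-/

section Greedy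

variable {ι W V : Type*} (K : Type*) [DivisionRing K] [AddCommGroup V] [Module K V] [LinearOrder W]

theorem exists_linearIndepOn_forall_mem_span_image_weight_le
    (v : ι → V) (w : ι → W) (T : Finset ι) :
    ∃ B ⊆ T, LinearIndepOn K v (B : Set ι) ∧
      ∀ i ∈ T, v i ∈ Submodule.span K (v '' {j | j ∈ B ∧ w i ≤ w j}) := by
  classical
  induction T using Finset.induction_on_min_value w with
  | empty => exact ⟨∅, by simp, by simp, by simp⟩
  | insert a T _ ha ih =>
    obtain ⟨B, hBT, hindep, hspan⟩ := ih
    simp_rw [Finset.forall_mem_insert]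
    by_cases haB : v a ∈ Submodule.span K (v '' (B : Set ι))
    · refine ⟨B, hBT.trans (Finset.subset_insert a T), hindep, ?_, hspan⟩
      refine Submodule.span_mono (Set.image_mono fun j hj => ?_) haB
      exact ⟨hj, ha j (hBT hj)⟩
    · refine ⟨insert a B, Finset.insert_subset_insert a hBT, ?_, ?_, fun i hi => ?_⟩
      · simpa only [Finset.coe_insert] using hindep.insert haB
      · exact Submodule.subset_span ⟨a, ⟨Finset.mem_insert_self a B, le_rfl⟩, rfl⟩
      · refine Submodule.span_mono (Set.image_mono fun j hj => ?_) (hspan i hi)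
        exact ⟨Finset.mem_insert_of_mem hj.1, hj.2⟩

theorem exists_card_le_finrank_forall_linearMap_ne_zero [Module.Finite K V]
    (v : ι → V) (w : ι → W) (T : Finset ι) :
    ∃ B ⊆ T, B.card ≤ Module.finrank K V ∧
      ∀ φ : V →ₗ[K] K, ∀ i ∈ T, φ (v i) ≠ 0 → ∃ j ∈ B, φ (v j) ≠ 0 ∧ w i ≤ w j := by
  obtain ⟨B, hBT, hindep, hspan⟩ :=
    exists_linearIndepOn_forall_mem_span_image_weight_le K v w T
  refine ⟨B, hBT, by simpa using LinearIndependent.fintype_card_le_finrank hindep,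
    fun φ i hi hφi => ?_⟩
  by_contra! hlt
  have hker : Submodule.span K (v '' {j | j ∈ B ∧ w i ≤ w j}) ≤ LinearMap.ker φ := by
    rw [Submodule.span_le]
    rintro _ ⟨j, ⟨hjB, hij⟩, rfl⟩
    by_contra hφj
    exact (hlt j hjB hφj).not_ge hij
  exact hφi (hker (hspan i hi))

end Greedy

section BoundedDegree

open MvPolynomial

theorem natCard_finsupp_sum_le (σ : Type*) [Fintype σ] (q : ℕ) :
    Nat.card {m : σ →₀ ℕ | (m.sum fun _ e => e) ≤ q} =
      (Fintype.card σ + q).choose (Fintype.card σ) := by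
  classical
  have hunion : {m : σ →₀ ℕ | (m.sum fun _ e => e) ≤ q} =
      ((Finset.range (q + 1)).biUnion Finset.univ.finsuppAntidiag : Finset (σ →₀ ℕ)) := by
    ext m
    simp [Finsupp.sum_fintype]
  have hdisj : (Finset.range (q + 1) : Set ℕ).PairwiseDisjoint
      (Finset.univ : Finset σ).finsuppAntidiag := by
    refine fun i _ j _ hij => Finset.disjoint_left.2 fun m hi hj => hij ?_
    rw [← (Finset.mem_finsuppAntidiag.1 hi).1, (Finset.mem_finsuppAntidiag.1 hj).1]
  rw [hunion, Nat.card_coe_set_eq, Set.ncard_coe_finset, Finset.card_biUnion hdisj]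
  simp only [Finset.card_finsuppAntidiag_nat_eq_multichoose, Finset.card_univ]
  rw [Nat.sum_range_multichoose, add_comm]

theorem finrank_restrictTotalDegree (σ R : Type*) [Fintype σ] [CommRing R] [Nontrivial R] (q : ℕ) :
    Module.finrank R (restrictTotalDegree σ R q) = (Fintype.card σ + q).choose (Fintype.card σ) :=
  (Module.finrank_eq_nat_card_basis (basisRestrictSupport R _)).trans (natCard_finsupp_sum_le σ q)

theorem exists_card_le_choose_forall_eval_ne_zero {ι K W σ : Type*} [Field K] [LinearOrder W]
    [Fintype σ] (q : ℕ) (c : ι → σ → K) (w : ι → W) (T : Finset ι) :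
    ∃ B ⊆ T, B.card ≤ (Fintype.card σ + q).choose (Fintype.card σ) ∧
      ∀ f : MvPolynomial σ K, f.totalDegree ≤ q → ∀ i ∈ T, eval (c i) f ≠ 0 →
        ∃ j ∈ B, eval (c j) f ≠ 0 ∧ w i ≤ w j := by
  let evalAt (i : ι) : Module.Dual K (restrictTotalDegree σ K q) :=
    (aeval (c i)).toLinearMap.domRestrict _
  obtain ⟨B, hBT, hcard, hB⟩ := exists_card_le_finrank_forall_linearMap_ne_zero K evalAt w T
  rw [Subspace.dual_finrank_eq, finrank_restrictTotalDegree] at hcard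
  refine ⟨B, hBT, hcard, fun f hf => ?_⟩
  exact hB (Module.Dual.eval K _ ⟨f, (mem_restrictTotalDegree σ q f).2 hf⟩)

end BoundedDegree

section FreeMonic

variable {R : Type*} [CommRing R]

theorem totalDegree_eval_C_freeMonic_le (p : ℕ) (a : R) :
    ((Polynomial.freeMonic R p).eval (MvPolynomial.C a)).totalDegree ≤ 1 := by
  simp only [Polynomial.freeMonic, Polynomial.eval_add, Polynomial.eval_pow, Polynomial.eval_X,
    Polynomial.eval_finsetSum, Polynomial.eval_mul, Polynomial.eval_C, ← MvPolynomial.C_pow]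
  refine (MvPolynomial.totalDegree_add _ _).trans (max_le ?_ ?_)
  · exact (MvPolynomial.totalDegree_C _).le.trans zero_le_one
  · refine MvPolynomial.totalDegree_finsetSum_le fun k _ => ?_
    refine (MvPolynomial.totalDegree_mul _ _).trans ?_
    rw [MvPolynomial.totalDegree_C, add_zero]
    exact (MvPolynomial.isHomogeneous_X R k).totalDegree_le

theorem map_eval_coeff_freeMonic {P : Polynomial R} (hP : P.Monic) :
    (Polynomial.freeMonic R P.natDegree).map
      (MvPolynomial.eval fun k : Fin P.natDegree => P.coeff k) = P := by
  conv_rhs => rw [hP.as_sum]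
  simp [Polynomial.freeMonic, Polynomial.map_sum, Finset.sum_range]

theorem eval_coeff_eval_C_freeMonic {P : Polynomial R} (hP : P.Monic) (a : R) :
    MvPolynomial.eval (fun k : Fin P.natDegree => P.coeff k)
      ((Polynomial.freeMonic R P.natDegree).eval (MvPolynomial.C a)) = P.eval a := by
  rw [← Polynomial.eval_map_apply, map_eval_coeff_freeMonic hP, MvPolynomial.eval_C]

end FreeMonic

section Avoidance

variable {U K : Type*} [CommRing K] {t : U → K}

/-- The monic polynomial encoding the set `X`: its roots are the points that `t` assigns to the
elements of `X`. -/
noncomputable def locator (t : U → K) (X : Finset U) : Polynomial K :=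
  ∏ x ∈ X, (Polynomial.X - Polynomial.C (t x))

theorem monic_locator (t : U → K) (X : Finset U) : (locator t X).Monic :=
  Polynomial.monic_prod_X_sub_C t X

theorem natDegree_locator [Nontrivial K] (t : U → K) (X : Finset U) :
    (locator t X).natDegree = X.card :=
  Polynomial.natDegree_finsetProd_X_sub_C_eq_card X t

theorem eval_locator_ne_zero_iff [IsDomain K] (ht : Function.Injective t) (X : Finset U) (y : U) :
    (locator t X).eval (t y) ≠ 0 ↔ y ∉ X := by
  simp [locator, Polynomial.eval_prod, Finset.prod_eq_zero_iff, sub_eq_zero, ht.eq_iff]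

/-- The polynomial testing disjointness from `Y`: at the coefficients of degree below `p` of a
monic polynomial `P` of degree `p` it takes the value `∏ y ∈ Y, P(t y)`. The leading coefficient
is not a variable, so that there are `p` variables and not `p + 1`. -/
noncomputable def avoidancePolynomial (t : U → K) (p : ℕ) (Y : Finset U) :
    MvPolynomial (Fin p) K :=
  ∏ y ∈ Y, (Polynomial.freeMonic K p).eval (MvPolynomial.C (t y))

theorem totalDegree_avoidancePolynomial_le (t : U → K) (p : ℕ) (Y : Finset U) :
    (avoidancePolynomial t p Y).totalDegree ≤ Y.card :=
  (MvPolynomial.totalDegree_finsetProd _ _).trans <| by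
    simpa using Finset.sum_le_card_nsmul Y _ 1 fun y _ => totalDegree_eval_C_freeMonic_le p (t y)

theorem eval_coeff_avoidancePolynomial (t : U → K) {P : Polynomial K} (hP : P.Monic)
    (Y : Finset U) :
    MvPolynomial.eval (fun k : Fin P.natDegree => P.coeff k)
      (avoidancePolynomial t P.natDegree Y) = ∏ y ∈ Y, P.eval (t y) := by
  simp only [avoidancePolynomial, map_prod, eval_coeff_eval_C_freeMonic hP]

theorem eval_coeff_locator_avoidancePolynomial_ne_zero_iff [IsDomain K]
    (ht : Function.Injective t) {X : Finset U} {p : ℕ} (hX : X.card = p) (Y : Finset U) :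
    MvPolynomial.eval (fun k : Fin p => (locator t X).coeff k) (avoidancePolynomial t p Y) ≠ 0 ↔
      Disjoint X Y := by
  obtain rfl : (locator t X).natDegree = p := (natDegree_locator t X).trans hX
  simp only [eval_coeff_avoidancePolynomial t (monic_locator t X), Finset.prod_ne_zero_iff,
    eval_locator_ne_zero_iff ht, Finset.disjoint_right]

end Avoidance

theorem statement7_general {U : Type*} [DecidableEq U] {p : ℕ} (q : ℕ) {S : Set (Finset U)}
    (hfin : S.Finite) (hcard : ∀ X ∈ S, X.card = p) (w : Finset U → ℕ) :
    ∃ Shat : Set (Finset U),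
      IsMaxQRepresentative q S Shat w ∧ Shat.ncard ≤ (p + q).choose p := by
  let t : U → FractionRing (MvPolynomial U ℚ) :=
    algebraMap (MvPolynomial U ℚ) _ ∘ MvPolynomial.X
  have ht : Function.Injective t := (IsFractionRing.injective _ _).comp MvPolynomial.X_injective
  obtain ⟨B, hBS, hBcard, hB⟩ := exists_card_le_choose_forall_eval_ne_zero q
    (fun X (k : Fin p) => (locator t X).coeff k) w hfin.toFinset
  have hBS' : (B : Set (Finset U)) ⊆ S := by simpa using hBS
  refine ⟨B, ⟨hBS', fun Y hY X hX hXY => ?_⟩, by simpa using hBcard⟩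
  obtain ⟨Z, hZB, hZ, hXZ⟩ := hB (avoidancePolynomial t p Y)
    ((totalDegree_avoidancePolynomial_le t p Y).trans hY) X (hfin.mem_toFinset.2 hX)
    ((eval_coeff_locator_avoidancePolynomial_ne_zero_iff ht (hcard X hX) Y).2 hXY)
  exact ⟨Z, hZB,
    (eval_coeff_locator_avoidancePolynomial_ne_zero_iff ht (hcard Z (hBS' hZB)) Y).1 hZ, hXZ⟩

/-- Let `α, β, γ ≥ 0` with `r = (α+β)γ ≥ 1`, let `U` be a
finite set with weights `ω : U → ℕ`, and let `H` be a `γ`-family over `U`. Let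
`S` be the family of all disjoint unions `H₁ ⊎ ⋯ ⊎ H_α` of `α` pairwise
disjoint members of `H`. Then there is a max `βγ`-representative `Shat ⊆ S`
of `S` w.r.t. `ω'(X) = Σ_{x ∈ X} ω x` with `|Shat| ≤ binom(r, αγ)`. -/
theorem statement7 {U : Type*} [Fintype U] [DecidableEq U]
    (a b c : ℕ) (hr : 1 ≤ (a + b) * c)
    (ω : U → ℕ) (H : Set (Finset U)) (hH : ∀ A ∈ H, A.card = c)
    (S : Set (Finset U))
    (hS : S = { X : Finset U | ∃ f : Fin a → Finset U,
        (∀ i, f i ∈ H) ∧ (∀ i j, i ≠ j → Disjoint (f i) (f j)) ∧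
        X = Finset.univ.biUnion f }) :
    ∃ Shat : Set (Finset U),
      IsMaxQRepresentative (b * c) S Shat (fun X => ∑ x ∈ X, ω x) ∧
        Shat.ncard ≤ Nat.choose ((a + b) * c) (a * c) := by
  subst hS
  rw [add_mul]
  refine statement7_general (b * c) (Set.toFinite _) ?_ _
  rintro _ ⟨f, hf, hdisj, rfl⟩
  rw [Finset.card_biUnion fun i _ j _ => hdisj i j, Finset.sum_const_nat fun i _ => hH _ (hf i),
    Finset.card_univ, Fintype.card_fin]
end
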